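/- arXiv:2104.14485 — 3 statements merged into one kernel-verified Lean document; each statement's English description precedes it below -/
import Mathlib

section
/- Let A be an alternative algebra over a field K of characteristic ≠ 2,3, V a K-vector space, and let Ω(A,V) = (▷, ◁, ⊵, ⊴, *, ω) and Ω'(A,V) = (▷', ◁', ⊵', ⊴', *', ω') be two extending structures of A by V with unified products A♮V and A♮'V. Then: (1) there exists an isomorphism of alternative algebras φ: A♮V → A♮'V with φ(x,0) = (x,0) for all x ∈ A if and only if there exist a linear map r: V→A and a bijective linear map s: V→V satisfying, for all x ∈ A, u,v ∈ V: s(u◁x) = s(u)◁'x; s(x▷u) = x▷'s(u); s(u*v) = r(u)▷'s(v) + s(u)◁'r(v) + s(u)*'s(v); r(u◁x) = r(u)∘x − u⊵x + s(u)⊵'x; r(x⊴u) = x∘r(u) − x⊴u + x⊴'s(u); r(u*v) = r(u)∘r(v) + ω'(s(u),s(v)) − ω(u,v) + r(u)⊴'s(v) + s(u)⊵'r(v). (2) There exists such an isomorphism φ which in addition has V-component of φ(x,u) equal to u for all (x,u) if and only if such a pair (r,s) exists with s = id_V. -/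
namespace AltExtend

variable {K : Type*} [Field K]
variable {A : Type*} [AddCommGroup A] [Module K A]
variable {V : Type*} [AddCommGroup V] [Module K V]

/-- The associator of a bilinear multiplication. -/
def assoc (m : A →ₗ[K] A →ₗ[K] A) (x y z : A) : A :=
  m (m x y) z - m x (m y z)

/-- `m` is an alternative algebra multiplication: the associator is alternating in the
first two and in the last two arguments. -/
def IsAltMul (m : A →ₗ[K] A →ₗ[K] A) : Prop :=
  (∀ x y z : A, assoc m x y z = - assoc m y x z) ∧
  (∀ x y z : A, assoc m x y z = - assoc m x z y)

/-- The unified product multiplication on `A × V` attached to an extending datum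
`Ω(A,V) = (tr, tl, pr, pl, st, om)`:
`(x,u) • (y,v) = (x∘y + u⊵y + x⊴v + ω(u,v), u*v + x▷v + u◁y)`. -/
def unifiedMul (m : A →ₗ[K] A →ₗ[K] A)
    (tr : A →ₗ[K] V →ₗ[K] V) (tl : V →ₗ[K] A →ₗ[K] V)
    (pr : V →ₗ[K] A →ₗ[K] A) (pl : A →ₗ[K] V →ₗ[K] A)
    (st : V →ₗ[K] V →ₗ[K] V) (om : V →ₗ[K] V →ₗ[K] A) :
    (A × V) →ₗ[K] (A × V) →ₗ[K] (A × V) :=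
  LinearMap.mk₂ K
    (fun p q => (m p.1 q.1 + pr p.2 q.1 + pl p.1 q.2 + om p.2 q.2,
                 st p.2 q.2 + tr p.1 q.2 + tl p.2 q.1))
    (fun p p' q => by simp [Prod.ext_iff]; constructor <;> abel)
    (fun c p q => by simp [Prod.ext_iff, smul_add])
    (fun p q q' => by simp [Prod.ext_iff]; constructor <;> abel)
    (fun c p q => by simp [Prod.ext_iff, smul_add])

/-- The linear map `φ_{r,s} : A × V → A × V`, `φ(x,u) = (x + r(u), s(u))`. -/
def phiRS (r : V →ₗ[K] A) (s : V →ₗ[K] V) : (A × V) →ₗ[K] (A × V) :=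
  (LinearMap.fst K A V + r ∘ₗ LinearMap.snd K A V).prod (s ∘ₗ LinearMap.snd K A V)

/-- The six compatibility conditions on the pair `(r,s)` relating the two extending
data `Ω(A,V)` and `Ω'(A,V)`. -/
def HomPairConditions (m : A →ₗ[K] A →ₗ[K] A)
    (tr : A →ₗ[K] V →ₗ[K] V) (tl : V →ₗ[K] A →ₗ[K] V)
    (pr : V →ₗ[K] A →ₗ[K] A) (pl : A →ₗ[K] V →ₗ[K] A)
    (st : V →ₗ[K] V →ₗ[K] V) (om : V →ₗ[K] V →ₗ[K] A)
    (tr' : A →ₗ[K] V →ₗ[K] V) (tl' : V →ₗ[K] A →ₗ[K] V)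
    (pr' : V →ₗ[K] A →ₗ[K] A) (pl' : A →ₗ[K] V →ₗ[K] A)
    (st' : V →ₗ[K] V →ₗ[K] V) (om' : V →ₗ[K] V →ₗ[K] A)
    (r : V →ₗ[K] A) (s : V →ₗ[K] V) : Prop :=
  (∀ (u : V) (x : A), s (tl u x) = tl' (s u) x) ∧
  (∀ (x : A) (u : V), s (tr x u) = tr' x (s u)) ∧
  (∀ u v : V, s (st u v) = tr' (r u) (s v) + tl' (s u) (r v) + st' (s u) (s v)) ∧
  (∀ (u : V) (x : A), r (tl u x) = m (r u) x - pr u x + pr' (s u) x) ∧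
  (∀ (x : A) (u : V), r (tr x u) = m x (r u) - pl x u + pl' x (s u)) ∧
  (∀ u v : V, r (st u v)
    = m (r u) (r v) + om' (s u) (s v) - om u v + pl' (r u) (s v) + pr' (s u) (r v))

/-!
A linear map `φ : A × V → A × V` fixing `A` is determined by its restriction to `V`, so it is
`φ(x,u) = (x + r(u), s(u))` for unique `r` and `s`. This is block triangular with the identity on
`A`, so it is bijective exactly when `s` is. By bilinearity, multiplicativity of `φ` may be tested
on `A × A`, `V × A`, `A × V` and `V × V`: the first test is automatic, and the two components of
each of the other three are the six compatibility conditions.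
-/

section ProdBilinear

variable {R M N P : Type*} [CommSemiring R] [AddCommMonoid M] [Module R M]
  [AddCommMonoid N] [Module R N] [AddCommMonoid P] [Module R P]

theorem forall_map_mul_prod_iff (φ : M × N →ₗ[R] P) (μ : M × N →ₗ[R] M × N →ₗ[R] M × N)
    (ν : P →ₗ[R] P →ₗ[R] P) :
    (∀ p q, φ (μ p q) = ν (φ p) (φ q)) ↔
      (∀ x y, φ (μ (x, 0) (y, 0)) = ν (φ (x, 0)) (φ (y, 0))) ∧
      (∀ u y, φ (μ (0, u) (y, 0)) = ν (φ (0, u)) (φ (y, 0))) ∧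
      (∀ x v, φ (μ (x, 0) (0, v)) = ν (φ (x, 0)) (φ (0, v))) ∧
      (∀ u v, φ (μ (0, u) (0, v)) = ν (φ (0, u)) (φ (0, v))) := by
  refine ⟨fun h => ⟨fun _ _ => h _ _, fun _ _ => h _ _, fun _ _ => h _ _, fun _ _ => h _ _⟩, ?_⟩
  rintro ⟨hMM, hNM, hMN, hNN⟩ ⟨x, u⟩ ⟨y, v⟩
  rw [← Prod.fst_add_snd (x, u), ← Prod.fst_add_snd (y, v)]
  simp only [map_add, LinearMap.add_apply, hMM, hNM, hMN, hNN]

end ProdBilinear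

section Stabilizing

variable {r : V →ₗ[K] A} {s : V →ₗ[K] V} {φ : (A × V) →ₗ[K] (A × V)}

@[simp]
theorem phiRS_apply (r : V →ₗ[K] A) (s : V →ₗ[K] V) (q : A × V) :
    phiRS r s q = (q.1 + r q.2, s q.2) :=
  rfl

theorem exists_eq_phiRS_iff : (∃ r s, φ = phiRS r s) ↔ ∀ x : A, φ (x, 0) = (x, 0) := by
  constructor
  · rintro ⟨r, s, rfl⟩ x
    simp
  · intro hA
    refine ⟨LinearMap.fst K A V ∘ₗ φ ∘ₗ LinearMap.inr K A V,
      LinearMap.snd K A V ∘ₗ φ ∘ₗ LinearMap.inr K A V, ?_⟩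
    ext <;> simp [hA]

theorem snd_phiRS_eq_snd_iff : (∀ q : A × V, (phiRS r s q).2 = q.2) ↔ s = LinearMap.id :=
  ⟨fun h => LinearMap.ext fun u => h (0, u), by rintro rfl q; rfl⟩

theorem phiRS_injective_iff : Function.Injective (phiRS r s) ↔ Function.Injective s := by
  simp only [injective_iff_map_eq_zero, phiRS_apply, Prod.forall, Prod.mk_eq_zero]
  constructor
  · intro h u hu
    exact (h (-r u) u ⟨neg_add_cancel _, hu⟩).2
  · rintro h x u ⟨hx, hu⟩
    obtain rfl := h u hu
    simpa using hx

theorem phiRS_surjective_iff : Function.Surjective (phiRS r s) ↔ Function.Surjective s := by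
  constructor
  · intro h v
    obtain ⟨q, hq⟩ := h (0, v)
    exact ⟨q.2, congrArg Prod.snd hq⟩
  · rintro h ⟨x, v⟩
    obtain ⟨u, rfl⟩ := h v
    exact ⟨(x - r u, u), by simp⟩

theorem phiRS_bijective_iff : Function.Bijective (phiRS r s) ↔ Function.Bijective s :=
  and_congr phiRS_injective_iff phiRS_surjective_iff

end Stabilizing

section UnifiedProduct

variable {m : A →ₗ[K] A →ₗ[K] A}
  {tr : A →ₗ[K] V →ₗ[K] V} {tl : V →ₗ[K] A →ₗ[K] V}
  {pr : V →ₗ[K] A →ₗ[K] A} {pl : A →ₗ[K] V →ₗ[K] A}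
  {st : V →ₗ[K] V →ₗ[K] V} {om : V →ₗ[K] V →ₗ[K] A}
  {tr' : A →ₗ[K] V →ₗ[K] V} {tl' : V →ₗ[K] A →ₗ[K] V}
  {pr' : V →ₗ[K] A →ₗ[K] A} {pl' : A →ₗ[K] V →ₗ[K] A}
  {st' : V →ₗ[K] V →ₗ[K] V} {om' : V →ₗ[K] V →ₗ[K] A}
  {r : V →ₗ[K] A} {s : V →ₗ[K] V}

@[simp]
theorem unifiedMul_apply (p q : A × V) :
    unifiedMul m tr tl pr pl st om p q =
      (m p.1 q.1 + pr p.2 q.1 + pl p.1 q.2 + om p.2 q.2,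
        st p.2 q.2 + tr p.1 q.2 + tl p.2 q.1) :=
  rfl

theorem phiRS_unifiedMul_inl_inl (x y : A) :
    phiRS r s (unifiedMul m tr tl pr pl st om (x, 0) (y, 0)) =
      unifiedMul m tr' tl' pr' pl' st' om' (phiRS r s (x, 0)) (phiRS r s (y, 0)) := by
  simp

theorem phiRS_unifiedMul_inr_inl_iff (u : V) (x : A) :
    phiRS r s (unifiedMul m tr tl pr pl st om (0, u) (x, 0)) =
        unifiedMul m tr' tl' pr' pl' st' om' (phiRS r s (0, u)) (phiRS r s (x, 0)) ↔
      s (tl u x) = tl' (s u) x ∧ r (tl u x) = m (r u) x - pr u x + pr' (s u) x := by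
  simp [and_comm, sub_add_eq_add_sub, eq_sub_iff_add_eq']

theorem phiRS_unifiedMul_inl_inr_iff (x : A) (u : V) :
    phiRS r s (unifiedMul m tr tl pr pl st om (x, 0) (0, u)) =
        unifiedMul m tr' tl' pr' pl' st' om' (phiRS r s (x, 0)) (phiRS r s (0, u)) ↔
      s (tr x u) = tr' x (s u) ∧ r (tr x u) = m x (r u) - pl x u + pl' x (s u) := by
  simp [and_comm, sub_add_eq_add_sub, eq_sub_iff_add_eq']

theorem phiRS_unifiedMul_inr_inr_iff (u v : V) :
    phiRS r s (unifiedMul m tr tl pr pl st om (0, u) (0, v)) =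
        unifiedMul m tr' tl' pr' pl' st' om' (phiRS r s (0, u)) (phiRS r s (0, v)) ↔
      s (st u v) = tr' (r u) (s v) + tl' (s u) (r v) + st' (s u) (s v) ∧
      r (st u v) =
        m (r u) (r v) + om' (s u) (s v) - om u v + pl' (r u) (s v) + pr' (s u) (r v) := by
  simp only [unifiedMul_apply, phiRS_apply, map_zero, LinearMap.zero_apply, zero_add, add_zero,
    Prod.mk.injEq]
  rw [and_comm]
  refine and_congr (Eq.congr_right (by abel)) ?_
  rw [← eq_sub_iff_add_eq']
  exact Eq.congr_right (by abel)

theorem phiRS_map_unifiedMul_iff :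
    (∀ q q' : A × V, phiRS r s (unifiedMul m tr tl pr pl st om q q') =
      unifiedMul m tr' tl' pr' pl' st' om' (phiRS r s q) (phiRS r s q')) ↔
    HomPairConditions m tr tl pr pl st om tr' tl' pr' pl' st' om' r s := by
  rw [forall_map_mul_prod_iff, and_iff_right phiRS_unifiedMul_inl_inl]
  simp only [phiRS_unifiedMul_inr_inl_iff, phiRS_unifiedMul_inl_inr_iff,
    phiRS_unifiedMul_inr_inr_iff, HomPairConditions, forall_and]
  tauto

theorem unified_products_equivalent_iff_general :
    ((∃ φ : (A × V) →ₗ[K] (A × V),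
        Function.Bijective φ ∧
        (∀ q q' : A × V,
          φ (unifiedMul m tr tl pr pl st om q q')
            = unifiedMul m tr' tl' pr' pl' st' om' (φ q) (φ q')) ∧
        (∀ x : A, φ (x, 0) = (x, 0))) ↔
      (∃ (r : V →ₗ[K] A) (s : V →ₗ[K] V), Function.Bijective s ∧
        HomPairConditions m tr tl pr pl st om tr' tl' pr' pl' st' om' r s)) ∧
    ((∃ φ : (A × V) →ₗ[K] (A × V),
        Function.Bijective φ ∧
        (∀ q q' : A × V,
          φ (unifiedMul m tr tl pr pl st om q q')
            = unifiedMul m tr' tl' pr' pl' st' om' (φ q) (φ q')) ∧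
        (∀ x : A, φ (x, 0) = (x, 0)) ∧
        (∀ q : A × V, (φ q).2 = q.2)) ↔
      (∃ r : V →ₗ[K] A,
        HomPairConditions m tr tl pr pl st om tr' tl' pr' pl' st' om' r LinearMap.id)) := by
  refine ⟨⟨?_, ?_⟩, ⟨?_, ?_⟩⟩
  · rintro ⟨φ, hφ, hmul, hA⟩
    obtain ⟨r, s, rfl⟩ := exists_eq_phiRS_iff.2 hA
    exact ⟨r, s, phiRS_bijective_iff.1 hφ, phiRS_map_unifiedMul_iff.1 hmul⟩
  · rintro ⟨r, s, hs, hrs⟩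
    exact ⟨phiRS r s, phiRS_bijective_iff.2 hs, phiRS_map_unifiedMul_iff.2 hrs,
      exists_eq_phiRS_iff.1 ⟨r, s, rfl⟩⟩
  · rintro ⟨φ, -, hmul, hA, hV⟩
    obtain ⟨r, s, rfl⟩ := exists_eq_phiRS_iff.2 hA
    obtain rfl := snd_phiRS_eq_snd_iff.1 hV
    exact ⟨r, phiRS_map_unifiedMul_iff.1 hmul⟩
  · rintro ⟨r, hr⟩
    exact ⟨phiRS r LinearMap.id, phiRS_bijective_iff.2 Function.bijective_id,
      phiRS_map_unifiedMul_iff.2 hr, exists_eq_phiRS_iff.1 ⟨r, _, rfl⟩,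
      snd_phiRS_eq_snd_iff.2 rfl⟩

end UnifiedProduct

/-- Equivalence and cohomological equivalence of two extending structures:
(1) there is an isomorphism of alternative algebras `A ♮ V → A ♮' V` stabilizing `A`
iff there is a pair `(r,s)` with `s` bijective satisfying the six compatibility
conditions; (2) there is such an isomorphism which moreover co-stabilizes `V` iff
there is such a pair with `s = id`. -/
theorem unified_products_equivalent_iff
    (h2 : ringChar K ≠ 2) (h3 : ringChar K ≠ 3)
    (m : A →ₗ[K] A →ₗ[K] A) (hm : IsAltMul m)
    (tr : A →ₗ[K] V →ₗ[K] V) (tl : V →ₗ[K] A →ₗ[K] V)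
    (pr : V →ₗ[K] A →ₗ[K] A) (pl : A →ₗ[K] V →ₗ[K] A)
    (st : V →ₗ[K] V →ₗ[K] V) (om : V →ₗ[K] V →ₗ[K] A)
    (tr' : A →ₗ[K] V →ₗ[K] V) (tl' : V →ₗ[K] A →ₗ[K] V)
    (pr' : V →ₗ[K] A →ₗ[K] A) (pl' : A →ₗ[K] V →ₗ[K] A)
    (st' : V →ₗ[K] V →ₗ[K] V) (om' : V →ₗ[K] V →ₗ[K] A)
    (hΩ : IsAltMul (unifiedMul m tr tl pr pl st om))
    (hΩ' : IsAltMul (unifiedMul m tr' tl' pr' pl' st' om')) :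
    ((∃ φ : (A × V) →ₗ[K] (A × V),
        Function.Bijective φ ∧
        (∀ q q' : A × V,
          φ (unifiedMul m tr tl pr pl st om q q')
            = unifiedMul m tr' tl' pr' pl' st' om' (φ q) (φ q')) ∧
        (∀ x : A, φ (x, 0) = (x, 0))) ↔
      (∃ (r : V →ₗ[K] A) (s : V →ₗ[K] V), Function.Bijective s ∧
        HomPairConditions m tr tl pr pl st om tr' tl' pr' pl' st' om' r s)) ∧
    ((∃ φ : (A × V) →ₗ[K] (A × V),
        Function.Bijective φ ∧
        (∀ q q' : A × V,
          φ (unifiedMul m tr tl pr pl st om q q')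
            = unifiedMul m tr' tl' pr' pl' st' om' (φ q) (φ q')) ∧
        (∀ x : A, φ (x, 0) = (x, 0)) ∧
        (∀ q : A × V, (φ q).2 = q.2)) ↔
      (∃ r : V →ₗ[K] A,
        HomPairConditions m tr tl pr pl st om tr' tl' pr' pl' st' om' r LinearMap.id)) :=
  unified_products_equivalent_iff_general

end AltExtend
end

section
/- Let (E, ∘) be an alternative algebra over a field K of characteristic ≠ 2,3 and let A, B ⊆ E be subalgebras such that E = A ⊕ B as vector spaces, with linear projections p_A: E → A and p_B: E → B. Define bilinear maps by x⊴u := p_A(x∘u), x▷u := p_B(x∘u), u⊵x := p_A(u∘x), u◁x := p_B(u∘x) for x ∈ A, u ∈ B. Then (A, B, ▷, ◁, ⊵, ⊴) is a matched pair of alternative algebras, i.e. the direct sum A⊕B with multiplication (x,u)•(y,v) := (x∘y + u⊵y + x⊴v, u∘v + x▷v + u◁y) is an alternative algebra, and the map (x,u) ↦ x + u is an isomorphism of alternative algebras A⋈B → E. -/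
namespace AltExtend

variable {K : Type*} [Field K]
variable {A : Type*} [AddCommGroup A] [Module K A]
variable {B : Type*} [AddCommGroup B] [Module K B]

/-- The bicrossed product multiplication on `A × B`:
`(x,u) • (y,v) = (x∘y + u⊵y + x⊴v, u*v + x▷v + u◁y)`, where `tr x v = x ▷ v`,
`tl u y = u ◁ y`, `pr u y = u ⊵ y` and `pl x v = x ⊴ v`. -/
def matchedMul (m : A →ₗ[K] A →ₗ[K] A) (mB : B →ₗ[K] B →ₗ[K] B)
    (tr : A →ₗ[K] B →ₗ[K] B) (tl : B →ₗ[K] A →ₗ[K] B)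
    (pr : B →ₗ[K] A →ₗ[K] A) (pl : A →ₗ[K] B →ₗ[K] A) :
    (A × B) →ₗ[K] (A × B) →ₗ[K] (A × B) :=
  LinearMap.mk₂ K
    (fun p q => (m p.1 q.1 + pr p.2 q.1 + pl p.1 q.2,
                 mB p.2 q.2 + tr p.1 q.2 + tl p.2 q.1))
    (fun p p' q => by simp [Prod.ext_iff]; constructor <;> abel)
    (fun c p q => by simp [Prod.ext_iff, smul_add])
    (fun p q q' => by simp [Prod.ext_iff]; constructor <;> abel)
    (fun c p q => by simp [Prod.ext_iff, smul_add])

/-! The bicrossed product multiplication is the multiplication of `E` transported along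
`(x, u) ↦ x + u`: a mixed product of `x ∈ A` and `u ∈ B` is the sum of its components in `A` and
in `B`. Alternativity is an identity, so it is reflected by this injective homomorphism, and no
compatibility condition of a matched pair has to be written out. -/

section

variable {E : Type*} [AddCommGroup E] [Module K E]
variable {m : A →ₗ[K] A →ₗ[K] A} {mB : B →ₗ[K] B →ₗ[K] B} {mE : E →ₗ[K] E →ₗ[K] E}

theorem map_assoc {f : A →ₗ[K] E} (hf : ∀ x y, f (m x y) = mE (f x) (f y)) (x y z : A) :
    f (assoc m x y z) = assoc mE (f x) (f y) (f z) := by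
  simp only [assoc, map_sub, hf]

theorem IsAltMul.of_injective (hE : IsAltMul mE) {f : A →ₗ[K] E} (hinj : Function.Injective f)
    (hf : ∀ x y, f (m x y) = mE (f x) (f y)) : IsAltMul m := by
  refine ⟨fun x y z => hinj ?_, fun x y z => hinj ?_⟩
  · simpa only [map_neg, map_assoc hf] using hE.1 (f x) (f y) (f z)
  · simpa only [map_neg, map_assoc hf] using hE.2 (f x) (f y) (f z)

theorem coprod_matchedMul {tr : A →ₗ[K] B →ₗ[K] B} {tl : B →ₗ[K] A →ₗ[K] B}
    {pr : B →ₗ[K] A →ₗ[K] A} {pl : A →ₗ[K] B →ₗ[K] A} {i : A →ₗ[K] E} {j : B →ₗ[K] E}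
    (hi : ∀ x y, i (m x y) = mE (i x) (i y)) (hj : ∀ u v, j (mB u v) = mE (j u) (j v))
    (hij : ∀ x u, i (pl x u) + j (tr x u) = mE (i x) (j u))
    (hji : ∀ u x, i (pr u x) + j (tl u x) = mE (j u) (i x)) (q q' : A × B) :
    i.coprod j (matchedMul m mB tr tl pr pl q q') = mE (i.coprod j q) (i.coprod j q') := by
  obtain ⟨x, u⟩ := q
  obtain ⟨y, v⟩ := q'
  calc i.coprod j (matchedMul m mB tr tl pr pl (x, u) (y, v))
      = i (m x y + pr u y + pl x v) + j (mB u v + tr x v + tl u y) := rfl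
    _ = i (m x y) + (i (pr u y) + j (tl u y)) + (i (pl x v) + j (tr x v)) + j (mB u v) := by
      simp only [map_add]
      abel
    _ = mE (i x) (i y) + mE (j u) (i y) + mE (i x) (j v) + mE (j u) (j v) := by
      rw [hi, hj, hij, hji]
    _ = mE (i.coprod j (x, u)) (i.coprod j (y, v)) := by
      simp only [LinearMap.coprod_apply, map_add, LinearMap.add_apply]
      abel

theorem bijective_coprod_subtype {A B : Submodule K E} (h : IsCompl A B) :
    Function.Bijective (A.subtype.coprod B.subtype) := by
  rw [← Submodule.coe_prodEquivOfIsCompl A B h]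
  exact (Submodule.prodEquivOfIsCompl A B h).bijective

theorem factorization_gives_matched_pair_general (hE : IsAltMul mE)
    {A B : Submodule K E} (hcompl : IsCompl A B)
    {mA : A →ₗ[K] A →ₗ[K] A} (hmA : ∀ x y : A, (mA x y : E) = mE x y)
    {mB : B →ₗ[K] B →ₗ[K] B} (hmB : ∀ u v : B, (mB u v : E) = mE u v)
    {tr : A →ₗ[K] B →ₗ[K] B} {tl : B →ₗ[K] A →ₗ[K] B}
    {pr : B →ₗ[K] A →ₗ[K] A} {pl : A →ₗ[K] B →ₗ[K] A}
    (hAB : ∀ (x : A) (u : B), (pl x u : E) + (tr x u : E) = mE x u)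
    (hBA : ∀ (u : B) (x : A), (pr u x : E) + (tl u x : E) = mE u x) :
    IsAltMul (matchedMul mA mB tr tl pr pl) ∧
    (∀ q : A × B, (A.subtype.coprod B.subtype) q = (q.1 : E) + (q.2 : E)) ∧
    Function.Bijective (A.subtype.coprod B.subtype) ∧
    (∀ q q' : A × B,
      (A.subtype.coprod B.subtype) (matchedMul mA mB tr tl pr pl q q')
        = mE ((A.subtype.coprod B.subtype) q) ((A.subtype.coprod B.subtype) q')) := by
  have hbij := bijective_coprod_subtype hcompl
  have hmul := coprod_matchedMul (i := A.subtype) (j := B.subtype) hmA hmB hAB hBA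
  exact ⟨hE.of_injective hbij.injective hmul, fun _ => rfl, hbij, hmul⟩

end

/-- If the alternative algebra `E` factorizes through two subalgebras `A` and `B`
(`E = A ⊕ B` as vector spaces, with projections `pA`, `pB`), then the bilinear maps
`x⊴u := pA(x∘u)`, `x▷u := pB(x∘u)`, `u⊵x := pA(u∘x)`, `u◁x := pB(u∘x)` make
`(A, B, ▷, ◁, ⊵, ⊴)` a matched pair of alternative algebras, and
`(x,u) ↦ x + u` is an isomorphism of alternative algebras `A ⋈ B ≅ E`. -/
theorem factorization_gives_matched_pair
    {E : Type*} [AddCommGroup E] [Module K E]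
    (h2 : ringChar K ≠ 2) (h3 : ringChar K ≠ 3)
    (mE : E →ₗ[K] E →ₗ[K] E) (hE : IsAltMul mE)
    (A B : Submodule K E)
    (hA : ∀ x ∈ A, ∀ y ∈ A, mE x y ∈ A) (hB : ∀ u ∈ B, ∀ v ∈ B, mE u v ∈ B)
    (hcompl : IsCompl A B)
    (pA pB : E →ₗ[K] E)
    (hpA : ∀ e : E, pA e ∈ A) (hpB : ∀ e : E, pB e ∈ B)
    (hsum : ∀ e : E, pA e + pB e = e)
    (mA : A →ₗ[K] A →ₗ[K] A) (hmA : ∀ x y : A, (mA x y : E) = mE x y)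
    (mB : B →ₗ[K] B →ₗ[K] B) (hmB : ∀ u v : B, (mB u v : E) = mE u v)
    (tr : A →ₗ[K] B →ₗ[K] B) (tl : B →ₗ[K] A →ₗ[K] B)
    (pr : B →ₗ[K] A →ₗ[K] A) (pl : A →ₗ[K] B →ₗ[K] A)
    (htr : ∀ (x : A) (u : B), ((tr x u : B) : E) = pB (mE x u))
    (htl : ∀ (u : B) (x : A), ((tl u x : B) : E) = pB (mE u x))
    (hpr : ∀ (u : B) (x : A), (pr u x : E) = pA (mE u x))
    (hpl : ∀ (x : A) (u : B), (pl x u : E) = pA (mE x u)) :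
    IsAltMul (matchedMul mA mB tr tl pr pl) ∧
    (∀ q : A × B, (A.subtype.coprod B.subtype) q = (q.1 : E) + (q.2 : E)) ∧
    Function.Bijective (A.subtype.coprod B.subtype) ∧
    (∀ q q' : A × B,
      (A.subtype.coprod B.subtype) (matchedMul mA mB tr tl pr pl q q')
        = mE ((A.subtype.coprod B.subtype) q) ((A.subtype.coprod B.subtype) q')) :=
  factorization_gives_matched_pair_general hE hcompl hmA hmB
    (fun x u => by rw [hpl, htr, hsum]) (fun u x => by rw [hpr, htl, hsum])

end AltExtend
end

section
/- Let (A, B, ▷, ◁, ⊵, ⊴) be a matched pair of alternative algebras over a field K of characteristic ≠ 2,3 with bicrossed product E = A⋈B. If B̄ is any A-complement of E (a subalgebra of E with E = A ⊕ B̄ as vector spaces), then there exists a deformation map r: B → A of the matched pair such that B̄ is isomorphic, as an alternative algebra, to the r-deformation B_r, i.e. to the vector space B equipped with the product u∘_r v := u∘v + r(u)▷v + u◁r(v). -/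
namespace AltExtend

variable {K : Type*} [Field K]
variable {A : Type*} [AddCommGroup A] [Module K A]
variable {B : Type*} [AddCommGroup B] [Module K B]

/-- `r : B → A` is a deformation map of the matched pair `(A, B, ▷, ◁, ⊵, ⊴)`. -/
def IsDefMap (m : A →ₗ[K] A →ₗ[K] A) (mB : B →ₗ[K] B →ₗ[K] B)
    (tr : A →ₗ[K] B →ₗ[K] B) (tl : B →ₗ[K] A →ₗ[K] B)
    (pr : B →ₗ[K] A →ₗ[K] A) (pl : A →ₗ[K] B →ₗ[K] A)
    (r : B →ₗ[K] A) : Prop :=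
  ∀ u v : B, r (mB u v) - m (r u) (r v)
    = pr u (r v) + pl (r u) v - r (tr (r u) v + tl u (r v))

/-- The `r`-deformation of the product of `B`: `u ∘_r v := u∘v + r(u)▷v + u◁r(v)`. -/
def deformedMul (mB : B →ₗ[K] B →ₗ[K] B)
    (tr : A →ₗ[K] B →ₗ[K] B) (tl : B →ₗ[K] A →ₗ[K] B)
    (r : B →ₗ[K] A) : B →ₗ[K] B →ₗ[K] B :=
  LinearMap.mk₂ K (fun u v => mB u v + tr (r u) v + tl u (r v))
    (fun u u' v => by simp; abel)
    (fun c u v => by simp)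
    (fun u v v' => by simp; abel)
    (fun c u v => by simp)

/-!
Complements of `A × 0` in `A × B` are exactly the graphs `{(r u, u)}` of linear maps `r : B → A`:
`(r u, u)` is the projection of `(0, u)` onto the complement along `A × 0`. Since
`(r u, u) • (r v, v)` has second component `u ∘_r v`, the graph is closed under `•` if and only if
the first component of this product is `r (u ∘_r v)`. That identity is the deformation map
equation, and it also says that `u ↦ (r u, u)` is multiplicative from `B_r` to the graph.
-/

section Graph

variable {R M N : Type*} [Semiring R] [AddCommMonoid M] [Module R M] [AddCommMonoid N] [Module R N]

theorem mem_range_prod_id_iff (r : N →ₗ[R] M) (p : M × N) :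
    p ∈ LinearMap.range (r.prod LinearMap.id) ↔ r p.2 = p.1 := by
  constructor
  · rintro ⟨u, rfl⟩
    rfl
  · exact fun hp => ⟨p.2, Prod.ext hp rfl⟩

theorem prod_id_injective (r : N →ₗ[R] M) : Function.Injective (r.prod LinearMap.id) :=
  fun _ _ h => congrArg Prod.snd h

end Graph

section Complement

variable {R M N : Type*} [Ring R] [AddCommGroup M] [Module R M] [AddCommGroup N] [Module R N]

theorem exists_range_prod_id_eq_of_isCompl_range_inl {C : Submodule R (M × N)}
    (hC : IsCompl (LinearMap.range (LinearMap.inl R M N)) C) :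
    ∃ r : N →ₗ[R] M, LinearMap.range (r.prod LinearMap.id) = C := by
  let π := C.projection _ hC.symm
  have snd_π (p : M × N) : (π p).2 = p.2 := by
    have hp : p - π p ∈ LinearMap.range (LinearMap.inl R M N) :=
      Submodule.sub_projection_mem hC.symm p
    rw [LinearMap.range_inl, LinearMap.mem_ker, map_sub, sub_eq_zero] at hp
    exact hp.symm
  have π_inr_snd (p : M × N) : π (0, p.2) = π p := by
    have π_inl : π (p.1, 0) = 0 :=
      (Submodule.projection_apply_eq_zero_iff hC.symm).2 ⟨p.1, rfl⟩
    calc π (0, p.2) = π (p.1, 0) + π (0, p.2) := by rw [π_inl, zero_add]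
      _ = π p := by rw [← map_add, Prod.fst_add_snd]
  refine ⟨LinearMap.fst R M N ∘ₗ π ∘ₗ LinearMap.inr R M N, ?_⟩
  ext p
  have π_eq_self_iff : π p = p ↔ p ∈ C := Submodule.projection_eq_self_iff hC.symm p
  rw [mem_range_prod_id_iff, ← π_eq_self_iff, Prod.ext_iff, and_iff_left (snd_π p)]
  change (π (0, p.2)).1 = p.1 ↔ (π p).1 = p.1
  rw [π_inr_snd]

end Complement

section DeformationMap

variable (m : A →ₗ[K] A →ₗ[K] A) (mB : B →ₗ[K] B →ₗ[K] B)
  (tr : A →ₗ[K] B →ₗ[K] B) (tl : B →ₗ[K] A →ₗ[K] B)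
  (pr : B →ₗ[K] A →ₗ[K] A) (pl : A →ₗ[K] B →ₗ[K] A)
  (r : B →ₗ[K] A)

theorem matchedMul_prod_id_snd (u v : B) :
    (matchedMul m mB tr tl pr pl (r.prod LinearMap.id u) (r.prod LinearMap.id v)).2
      = deformedMul mB tr tl r u v :=
  rfl

theorem isDefMap_iff_map_deformedMul :
    IsDefMap m mB tr tl pr pl r ↔ ∀ u v : B,
      r (deformedMul mB tr tl r u v)
        = (matchedMul m mB tr tl pr pl (r.prod LinearMap.id u) (r.prod LinearMap.id v)).1 := by
  refine forall₂_congr fun u v => ?_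
  change _ ↔ r (mB u v + tr (r u) v + tl u (r v)) = m (r u) (r v) + pr u (r v) + pl (r u) v
  rw [sub_eq_sub_iff_add_eq_add, ← map_add, ← add_assoc, add_comm _ (m _ _), ← add_assoc]

theorem isDefMap_iff_prod_id_deformedMul :
    IsDefMap m mB tr tl pr pl r ↔ ∀ u v : B,
      r.prod LinearMap.id (deformedMul mB tr tl r u v)
        = matchedMul m mB tr tl pr pl (r.prod LinearMap.id u) (r.prod LinearMap.id v) := by
  rw [isDefMap_iff_map_deformedMul]
  refine forall₂_congr fun u v => ?_
  rw [Prod.ext_iff, matchedMul_prod_id_snd]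
  exact (and_iff_left rfl).symm

theorem isDefMap_iff_matchedMul_mem_range_prod_id :
    IsDefMap m mB tr tl pr pl r ↔ ∀ p ∈ LinearMap.range (r.prod LinearMap.id),
      ∀ q ∈ LinearMap.range (r.prod LinearMap.id),
        matchedMul m mB tr tl pr pl p q ∈ LinearMap.range (r.prod LinearMap.id) := by
  rw [isDefMap_iff_map_deformedMul]
  constructor
  · rintro h _ ⟨u, rfl⟩ _ ⟨v, rfl⟩
    exact (mem_range_prod_id_iff r _).2 (h u v)
  · exact fun h u v => (mem_range_prod_id_iff r _).1 (h _ ⟨u, rfl⟩ _ ⟨v, rfl⟩)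

theorem complement_is_deformation_general (C : Submodule K (A × B))
    (hC : ∀ p ∈ C, ∀ q ∈ C, matchedMul m mB tr tl pr pl p q ∈ C)
    (hcompl : IsCompl (LinearMap.range (LinearMap.inl K A B)) C) :
    ∃ r : B →ₗ[K] A, IsDefMap m mB tr tl pr pl r ∧
      ∃ ψ : B →ₗ[K] A × B, Function.Injective ψ ∧ LinearMap.range ψ = C ∧
        ∀ u v : B,
          ψ (deformedMul mB tr tl r u v)
            = matchedMul m mB tr tl pr pl (ψ u) (ψ v) := by
  obtain ⟨r, rfl⟩ := exists_range_prod_id_eq_of_isCompl_range_inl hcompl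
  have hr : IsDefMap m mB tr tl pr pl r :=
    (isDefMap_iff_matchedMul_mem_range_prod_id m mB tr tl pr pl r).2 hC
  exact ⟨r, hr, r.prod LinearMap.id, prod_id_injective r, rfl,
    (isDefMap_iff_prod_id_deformedMul m mB tr tl pr pl r).1 hr⟩

end DeformationMap

/-- Given a matched pair of alternative algebras with bicrossed product `E = A ⋈ B`, any
`A`-complement `B̄` of `E` (a subalgebra of `E` with `E = A ⊕ B̄`) is isomorphic, as an
alternative algebra, to the `r`-deformation `B_r` of `B` for some deformation map
`r : B → A`. -/
theorem complement_is_deformation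
    (h2 : ringChar K ≠ 2) (h3 : ringChar K ≠ 3)
    (m : A →ₗ[K] A →ₗ[K] A) (hm : IsAltMul m)
    (mB : B →ₗ[K] B →ₗ[K] B) (hmB : IsAltMul mB)
    (tr : A →ₗ[K] B →ₗ[K] B) (tl : B →ₗ[K] A →ₗ[K] B)
    (pr : B →ₗ[K] A →ₗ[K] A) (pl : A →ₗ[K] B →ₗ[K] A)
    (hmp : IsAltMul (matchedMul m mB tr tl pr pl))
    (C : Submodule K (A × B))
    (hC : ∀ p ∈ C, ∀ q ∈ C, matchedMul m mB tr tl pr pl p q ∈ C)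
    (hcompl : IsCompl (LinearMap.range (LinearMap.inl K A B)) C) :
    ∃ r : B →ₗ[K] A, IsDefMap m mB tr tl pr pl r ∧
      ∃ ψ : B →ₗ[K] A × B, Function.Injective ψ ∧ LinearMap.range ψ = C ∧
        ∀ u v : B,
          ψ (deformedMul mB tr tl r u v)
            = matchedMul m mB tr tl pr pl (ψ u) (ψ v) :=
  complement_is_deformation_general m mB tr tl pr pl C hC hcompl

end AltExtend
end
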